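/- Let Φ denote the standard normal CDF and φ the standard normal density. As K → ∞, E[K·φ(X)²·Φ(X)^{K−3}] = Θ((log K)/K²), where X ~ N(0,1). -/

import Mathlib

open MeasureTheory

/-- The standard normal density. -/
noncomputable def stdNormalPdf (x : ℝ) : ℝ :=
  (Real.sqrt (2 * Real.pi))⁻¹ * Real.exp (-(x ^ 2) / 2)

/-- The standard normal cumulative distribution function. -/
noncomputable def stdNormalCdf (x : ℝ) : ℝ := ∫ t in Set.Iic x, stdNormalPdf t

/-!
Let `M n` be the maximum of `n` independent standard normal variables; its distribution function
is `Φ ^ n` and its density `n φ Φ ^ (n - 1)`. Since `φ' = -x φ`, two integrations by parts against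
powers of `Φ` give `(K - 1) (K - 2) · K ∫ φ³ Φ ^ (K - 3) = 2 (E[(M K)²] - 1)`, so the claim amounts
to `E[(M n)²] = Θ(log n)`. The upper bound integrates the Fenchel–Young inequality
`t ≤ exp t / n + log n - 1` at `t = s x²`, and the lower bound is Markov's inequality at
`√(log n)`, below which `M n` stays with probability bounded away from `1`.
-/

open Filter Topology Asymptotics ProbabilityTheory

section Density

lemma stdNormalPdf_eq_gaussianPDFReal : stdNormalPdf = gaussianPDFReal 0 1 := by
  funext x
  simp [stdNormalPdf, gaussianPDFReal]

lemma stdNormalPdf_pos (x : ℝ) : 0 < stdNormalPdf x := by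
  unfold stdNormalPdf
  positivity

lemma stdNormalPdf_le_one (x : ℝ) : stdNormalPdf x ≤ 1 := by
  refine mul_le_one₀ (inv_le_one_of_one_le₀ ?_) (Real.exp_nonneg _) ?_
  · rw [Real.one_le_sqrt]
    linarith [Real.pi_gt_three]
  · rw [Real.exp_le_one_iff]
    linarith [sq_nonneg x]

lemma stdNormalPdf_le_of_sq_le_sq {x y : ℝ} (h : x ^ 2 ≤ y ^ 2) :
    stdNormalPdf y ≤ stdNormalPdf x := by
  unfold stdNormalPdf
  gcongr

lemma hasDerivAt_stdNormalPdf (x : ℝ) : HasDerivAt stdNormalPdf (-x * stdNormalPdf x) x := by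
  have hexponent : HasDerivAt (fun y : ℝ => -(y ^ 2) / 2) (-x) x :=
    ((hasDerivAt_pow 2 x).fun_neg.div_const 2).congr_deriv (by simp; ring)
  exact (hexponent.exp.const_mul _).congr_deriv (by unfold stdNormalPdf; ring)

lemma continuous_stdNormalPdf : Continuous stdNormalPdf := by
  unfold stdNormalPdf
  fun_prop

lemma integrable_stdNormalPdf : Integrable stdNormalPdf :=
  stdNormalPdf_eq_gaussianPDFReal ▸ integrable_gaussianPDFReal 0 1

lemma integrable_pow_mul_stdNormalPdf (j : ℕ) : Integrable fun x => x ^ j * stdNormalPdf x := by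
  have hrpow := integrable_rpow_mul_exp_neg_mul_sq (b := 1 / 2) (by norm_num)
    (s := j) (by linarith [Nat.cast_nonneg (α := ℝ) j])
  refine (hrpow.const_mul (√(2 * Real.pi))⁻¹).congr (ae_of_all _ fun x => ?_)
  simp only [stdNormalPdf, Real.rpow_natCast]
  ring_nf

lemma exp_mul_sq_mul_stdNormalPdf (s x : ℝ) :
    Real.exp (s * x ^ 2) * stdNormalPdf x
      = (√(2 * Real.pi))⁻¹ * Real.exp (-(1 / 2 - s) * x ^ 2) := by
  rw [stdNormalPdf, mul_left_comm, ← Real.exp_add]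
  ring_nf

lemma integrable_exp_mul_sq_mul_stdNormalPdf {s : ℝ} (hs : s < 1 / 2) :
    Integrable fun x => Real.exp (s * x ^ 2) * stdNormalPdf x := by
  simp only [exp_mul_sq_mul_stdNormalPdf]
  exact (integrable_exp_neg_mul_sq (sub_pos.2 hs)).const_mul _

lemma exp_neg_sq_mul_stdNormalPdf_sqrt_two_mul_le (a h : ℝ) :
    Real.exp (-a ^ 2) * stdNormalPdf (√2 * h) ≤ stdNormalPdf (a + h) := by
  have hsq : (√2 * h) ^ 2 = 2 * h ^ 2 := by rw [mul_pow, Real.sq_sqrt zero_le_two]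
  rw [stdNormalPdf, mul_left_comm, ← Real.exp_add, hsq, stdNormalPdf]
  gcongr
  linarith [add_sq_le (a := a) (b := h)]

end Density

section DistributionFunction

lemma stdNormalCdf_eq_cdf_gaussianReal : stdNormalCdf = cdf (gaussianReal 0 1) := by
  funext x
  rw [cdf_eq_real, Measure.real, gaussianReal_apply_eq_integral 0 one_ne_zero,
    ENNReal.toReal_ofReal (integral_nonneg fun t => gaussianPDFReal_nonneg 0 1 t),
    stdNormalCdf, stdNormalPdf_eq_gaussianPDFReal]

lemma stdNormalCdf_nonneg (x : ℝ) : 0 ≤ stdNormalCdf x :=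
  stdNormalCdf_eq_cdf_gaussianReal ▸ cdf_nonneg _ x

lemma stdNormalCdf_le_one (x : ℝ) : stdNormalCdf x ≤ 1 :=
  stdNormalCdf_eq_cdf_gaussianReal ▸ cdf_le_one _ x

lemma tendsto_stdNormalCdf_atBot : Tendsto stdNormalCdf atBot (𝓝 0) :=
  stdNormalCdf_eq_cdf_gaussianReal ▸ tendsto_cdf_atBot _

lemma tendsto_stdNormalCdf_atTop : Tendsto stdNormalCdf atTop (𝓝 1) :=
  stdNormalCdf_eq_cdf_gaussianReal ▸ tendsto_cdf_atTop _

lemma hasDerivAt_integral_Iic {E : Type*} [NormedAddCommGroup E] [NormedSpace ℝ E]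
    [CompleteSpace E] {f : ℝ → E} (hf : Integrable f) (hcont : Continuous f) (x : ℝ) :
    HasDerivAt (fun y => ∫ t in Set.Iic y, f t) (f x) x := by
  have hsplit : (fun y => ∫ t in Set.Iic y, f t)
      = fun y => (∫ t in Set.Iic x, f t) + ∫ t in x..y, f t := by
    funext y
    rw [← intervalIntegral.integral_Iic_sub_Iic hf.integrableOn hf.integrableOn,
      add_sub_cancel]
  rw [hsplit]
  exact (hcont.integral_hasStrictDerivAt x x).hasDerivAt.const_add _

lemma hasDerivAt_stdNormalCdf (x : ℝ) : HasDerivAt stdNormalCdf (stdNormalPdf x) x :=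
  hasDerivAt_integral_Iic integrable_stdNormalPdf continuous_stdNormalPdf x

lemma continuous_stdNormalCdf : Continuous stdNormalCdf :=
  continuous_iff_continuousAt.2 fun x => (hasDerivAt_stdNormalCdf x).continuousAt

lemma integrable_mul_stdNormalCdf_pow {f : ℝ → ℝ} (hf : Integrable f) (n : ℕ) :
    Integrable fun x => f x * stdNormalCdf x ^ n := by
  refine hf.mul_bdd (c := 1) (continuous_stdNormalCdf.pow n).aestronglyMeasurable
    (ae_of_all _ fun x => ?_)
  rw [Real.norm_of_nonneg (pow_nonneg (stdNormalCdf_nonneg x) n)]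
  exact pow_le_one₀ (stdNormalCdf_nonneg x) (stdNormalCdf_le_one x)

lemma mul_stdNormalPdf_add_le_one_sub_stdNormalCdf {a h : ℝ} (ha : 0 ≤ a) (hh : 0 ≤ h) :
    h * stdNormalPdf (a + h) ≤ 1 - stdNormalCdf a := by
  have htail : ∫ t in Set.Ioi a, stdNormalPdf t = 1 - stdNormalCdf a :=
    integral_Ioi_of_hasDerivAt_of_tendsto' (fun x _ => hasDerivAt_stdNormalCdf x)
      integrable_stdNormalPdf.integrableOn tendsto_stdNormalCdf_atTop
  calc h * stdNormalPdf (a + h)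
    _ = ∫ _ in Set.Ioc a (a + h), stdNormalPdf (a + h) := by simp [hh]
    _ ≤ ∫ t in Set.Ioc a (a + h), stdNormalPdf t :=
      setIntegral_mono_on (by simp) integrable_stdNormalPdf.integrableOn measurableSet_Ioc
        fun t ht => stdNormalPdf_le_of_sq_le_sq (pow_le_pow_left₀ (ha.trans ht.1.le) ht.2 2)
    _ ≤ ∫ t in Set.Ioi a, stdNormalPdf t :=
      setIntegral_mono_set integrable_stdNormalPdf.integrableOn
        (ae_of_all _ fun t => (stdNormalPdf_pos t).le) Set.Ioc_subset_Ioi_self.eventuallyLE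
    _ = 1 - stdNormalCdf a := htail

lemma stdNormalCdf_sqrt_log_pow_le {n : ℕ} (hn : n ≠ 0) :
    stdNormalCdf √(Real.log n) ^ n ≤ Real.exp (-stdNormalPdf √2) := by
  have hn' : (1 : ℝ) ≤ n := Nat.one_le_cast.2 (Nat.one_le_iff_ne_zero.2 hn)
  have hexp : Real.exp (-√(Real.log n) ^ 2) = (n : ℝ)⁻¹ := by
    rw [Real.sq_sqrt (Real.log_nonneg hn'), Real.exp_neg, Real.exp_log (by positivity)]
  have htail : stdNormalPdf √2 / n ≤ 1 - stdNormalCdf √(Real.log n) := by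
    have hle := exp_neg_sq_mul_stdNormalPdf_sqrt_two_mul_le √(Real.log n) 1
    rw [mul_one, hexp, inv_mul_eq_div] at hle
    have hge := mul_stdNormalPdf_add_le_one_sub_stdNormalCdf (Real.sqrt_nonneg (Real.log n))
      zero_le_one
    linarith
  calc stdNormalCdf √(Real.log n) ^ n
    _ ≤ (1 - stdNormalPdf √2 / n) ^ n :=
      pow_le_pow_left₀ (stdNormalCdf_nonneg _) (le_sub_comm.1 htail) n
    _ ≤ Real.exp (-stdNormalPdf √2) :=
      Real.one_sub_div_pow_le_exp_neg ((stdNormalPdf_le_one _).trans hn')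

end DistributionFunction

section MaximumDensity

/-- The density of the maximum of `n` independent standard normal variables, that is, the
derivative of `Φⁿ`; it vanishes for `n = 0`. -/
noncomputable def stdNormalMaxPdf (n : ℕ) (x : ℝ) : ℝ :=
  n * stdNormalCdf x ^ (n - 1) * stdNormalPdf x

lemma hasDerivAt_stdNormalCdf_pow (n : ℕ) (x : ℝ) :
    HasDerivAt (fun y => stdNormalCdf y ^ n) (stdNormalMaxPdf n x) x :=
  (hasDerivAt_stdNormalCdf x).fun_pow n

lemma stdNormalMaxPdf_nonneg (n : ℕ) (x : ℝ) : 0 ≤ stdNormalMaxPdf n x :=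
  mul_nonneg (mul_nonneg n.cast_nonneg (pow_nonneg (stdNormalCdf_nonneg x) _))
    (stdNormalPdf_pos x).le

lemma stdNormalMaxPdf_le (n : ℕ) (x : ℝ) : stdNormalMaxPdf n x ≤ n * stdNormalPdf x :=
  mul_le_mul_of_nonneg_right
    (mul_le_of_le_one_right n.cast_nonneg
      (pow_le_one₀ (stdNormalCdf_nonneg x) (stdNormalCdf_le_one x)))
    (stdNormalPdf_pos x).le

lemma integrable_pow_mul_stdNormalMaxPdf (j n : ℕ) :
    Integrable fun x => x ^ j * stdNormalMaxPdf n x := by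
  have hint := integrable_mul_stdNormalCdf_pow (integrable_pow_mul_stdNormalPdf j) (n - 1)
  refine (hint.const_mul (n : ℝ)).congr (ae_of_all _ fun x => ?_)
  simp only [stdNormalMaxPdf]
  ring

lemma integrable_stdNormalMaxPdf (n : ℕ) : Integrable (stdNormalMaxPdf n) := by
  simpa only [pow_zero, one_mul] using integrable_pow_mul_stdNormalMaxPdf 0 n

lemma integral_stdNormalMaxPdf {n : ℕ} (hn : n ≠ 0) : ∫ x, stdNormalMaxPdf n x = 1 := by
  simpa [hn] using integral_of_hasDerivAt_of_tendsto (hasDerivAt_stdNormalCdf_pow n)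
    (integrable_stdNormalMaxPdf n) (tendsto_stdNormalCdf_atBot.pow n)
    (tendsto_stdNormalCdf_atTop.pow n)

lemma integral_Ioi_stdNormalMaxPdf (n : ℕ) (a : ℝ) :
    ∫ x in Set.Ioi a, stdNormalMaxPdf n x = 1 - stdNormalCdf a ^ n := by
  simpa using integral_Ioi_of_hasDerivAt_of_tendsto'
    (fun x _ => hasDerivAt_stdNormalCdf_pow n x) (integrable_stdNormalMaxPdf n).integrableOn
    (tendsto_stdNormalCdf_atTop.pow n)

end MaximumDensity

section Moments

/-- The integral `∫ xʲ φ(x)ᵏ Φ(x)ⁿ dx`: the case `j = 0`, `k = 3` is the integral to be estimated,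
and `k = 1` gives, up to a factor `n + 1`, the `j`-th moment of the maximum of `n + 1` independent
standard normal variables. -/
noncomputable def stdNormalMoment (j k n : ℕ) : ℝ :=
  ∫ x, x ^ j * stdNormalPdf x ^ k * stdNormalCdf x ^ n

lemma integrable_stdNormalMoment (j k n : ℕ) :
    Integrable fun x => x ^ j * stdNormalPdf x ^ (k + 1) * stdNormalCdf x ^ n := by
  refine integrable_mul_stdNormalCdf_pow ?_ n
  have hbdd : Integrable fun x => x ^ j * stdNormalPdf x * stdNormalPdf x ^ k := by
    refine (integrable_pow_mul_stdNormalPdf j).mul_bdd (c := 1)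
      (continuous_stdNormalPdf.pow k).aestronglyMeasurable (ae_of_all _ fun x => ?_)
    rw [Real.norm_of_nonneg (pow_nonneg (stdNormalPdf_pos x).le k)]
    exact pow_le_one₀ (stdNormalPdf_pos x).le (stdNormalPdf_le_one x)
  simpa only [mul_assoc, ← pow_succ'] using hbdd

lemma stdNormalMoment_nonneg {j : ℕ} (hj : Even j) (k n : ℕ) : 0 ≤ stdNormalMoment j k n :=
  integral_nonneg fun x => mul_nonneg
    (mul_nonneg (hj.pow_nonneg x) (pow_nonneg (stdNormalPdf_pos x).le k))
    (pow_nonneg (stdNormalCdf_nonneg x) n)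

lemma integral_pow_mul_stdNormalMaxPdf (j n : ℕ) :
    ∫ x, x ^ j * stdNormalMaxPdf n x = n * stdNormalMoment j 1 (n - 1) := by
  rw [stdNormalMoment, ← integral_const_mul]
  congr 1 with x
  rw [stdNormalMaxPdf]
  ring

/-- Integration by parts of `xʲ φᵏ⁺¹` against `(Φⁿ⁺¹)' = (n + 1) Φⁿ φ`. -/
lemma stdNormalMoment_recurrence (j k n : ℕ) :
    (n + 1) * stdNormalMoment j (k + 2) n
      = (k + 1) * stdNormalMoment (j + 1) (k + 1) (n + 1)
        - j * stdNormalMoment (j - 1) (k + 1) (n + 1) := by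
  set u' : ℝ → ℝ := fun x => j * (x ^ (j - 1) * stdNormalPdf x ^ (k + 1))
    - (k + 1) * (x ^ (j + 1) * stdNormalPdf x ^ (k + 1))
  have hderiv (x : ℝ) : HasDerivAt (fun y => y ^ j * stdNormalPdf y ^ (k + 1)) (u' x) x :=
    ((hasDerivAt_pow j x).fun_mul ((hasDerivAt_stdNormalPdf x).fun_pow (k + 1))).congr_deriv
      (by simp only [u', Nat.add_sub_cancel]; push_cast; ring)
  have hleft (x : ℝ) : (n + 1) * (x ^ j * stdNormalPdf x ^ (k + 2) * stdNormalCdf x ^ n)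
      = x ^ j * stdNormalPdf x ^ (k + 1) * stdNormalMaxPdf (n + 1) x := by
    simp only [stdNormalMaxPdf, Nat.add_sub_cancel]
    push_cast
    ring
  have hright (x : ℝ) : u' x * stdNormalCdf x ^ (n + 1)
      = j * (x ^ (j - 1) * stdNormalPdf x ^ (k + 1) * stdNormalCdf x ^ (n + 1))
        - (k + 1) * (x ^ (j + 1) * stdNormalPdf x ^ (k + 1) * stdNormalCdf x ^ (n + 1)) := by
    simp only [u']
    ring
  have hlower := (integrable_stdNormalMoment (j - 1) k (n + 1)).const_mul (j : ℝ)
  have hupper := (integrable_stdNormalMoment (j + 1) k (n + 1)).const_mul ((k : ℝ) + 1)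
  have hparts := integral_mul_deriv_eq_deriv_mul_of_integrable (fun x _ => hderiv x)
    (fun x _ => hasDerivAt_stdNormalCdf_pow (n + 1) x)
    (((integrable_stdNormalMoment j (k + 1) n).const_mul ((n : ℝ) + 1)).congr
      (ae_of_all _ hleft))
    ((hlower.sub hupper).congr (ae_of_all _ fun x => (hright x).symm))
    (integrable_stdNormalMoment j k (n + 1))
  simp only [← hleft, hright] at hparts
  rw [integral_sub hlower hupper, integral_const_mul, integral_const_mul, integral_const_mul,
    neg_sub] at hparts
  exact hparts

lemma mul_stdNormalMoment_zero_three {n : ℕ} (hn : 3 ≤ n) :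
    ((n : ℝ) - 1) * (n - 2) * (n * stdNormalMoment 0 3 (n - 3))
      = 2 * ((∫ x, x ^ 2 * stdNormalMaxPdf n x) - 1) := by
  obtain ⟨m, rfl⟩ := Nat.exists_eq_add_of_le' hn
  have hmass : ((m + 3 : ℕ) : ℝ) * stdNormalMoment 0 1 (m + 2) = 1 := by
    rw [← integral_stdNormalMaxPdf (n := m + 3) (by omega)]
    simpa using (integral_pow_mul_stdNormalMaxPdf 0 (m + 3)).symm
  have hfirst : (m + 1) * stdNormalMoment 0 3 m = 2 * stdNormalMoment 1 2 (m + 1) := by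
    simpa [one_add_one_eq_two] using stdNormalMoment_recurrence 0 1 m
  have hsecond : (m + 2) * stdNormalMoment 1 2 (m + 1)
      = stdNormalMoment 2 1 (m + 2) - stdNormalMoment 0 1 (m + 2) := by
    simpa [add_assoc, one_add_one_eq_two] using stdNormalMoment_recurrence 1 0 (m + 1)
  rw [integral_pow_mul_stdNormalMaxPdf, Nat.add_sub_cancel, show m + 3 - 1 = m + 2 by omega]
  push_cast at hmass ⊢
  linear_combination ((m : ℝ) + 2) * (m + 3) * hfirst + 2 * (m + 3) * hsecond - 2 * hmass

end Moments

section SecondMomentOfMaximum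

lemma pow_mul_one_sub_stdNormalCdf_pow_le {j : ℕ} (hj : Even j) {a : ℝ} (ha : 0 ≤ a) (n : ℕ) :
    a ^ j * (1 - stdNormalCdf a ^ n) ≤ ∫ x, x ^ j * stdNormalMaxPdf n x :=
  calc a ^ j * (1 - stdNormalCdf a ^ n)
    _ = ∫ x in Set.Ioi a, a ^ j * stdNormalMaxPdf n x := by
      rw [integral_const_mul, integral_Ioi_stdNormalMaxPdf]
    _ ≤ ∫ x in Set.Ioi a, x ^ j * stdNormalMaxPdf n x :=
      setIntegral_mono_on ((integrable_stdNormalMaxPdf n).const_mul _).integrableOn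
        (integrable_pow_mul_stdNormalMaxPdf j n).integrableOn measurableSet_Ioi fun x hx =>
          mul_le_mul_of_nonneg_right (pow_le_pow_left₀ ha (le_of_lt hx) j)
            (stdNormalMaxPdf_nonneg n x)
    _ ≤ ∫ x, x ^ j * stdNormalMaxPdf n x :=
      setIntegral_le_integral (integrable_pow_mul_stdNormalMaxPdf j n)
        (ae_of_all _ fun x => mul_nonneg (hj.pow_nonneg x) (stdNormalMaxPdf_nonneg n x))

lemma mul_log_le_integral_sq_mul_stdNormalMaxPdf {n : ℕ} (hn : n ≠ 0) :
    (1 - Real.exp (-stdNormalPdf √2)) * Real.log n ≤ ∫ x, x ^ 2 * stdNormalMaxPdf n x :=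
  calc (1 - Real.exp (-stdNormalPdf √2)) * Real.log n
    _ ≤ (1 - stdNormalCdf √(Real.log n) ^ n) * Real.log n :=
      mul_le_mul_of_nonneg_right (sub_le_sub_left (stdNormalCdf_sqrt_log_pow_le hn) 1)
        (Real.log_natCast_nonneg n)
    _ = √(Real.log n) ^ 2 * (1 - stdNormalCdf √(Real.log n) ^ n) := by
      rw [Real.sq_sqrt (Real.log_natCast_nonneg n), mul_comm]
    _ ≤ ∫ x, x ^ 2 * stdNormalMaxPdf n x :=
      pow_mul_one_sub_stdNormalCdf_pow_le even_two (Real.sqrt_nonneg _) n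

lemma le_exp_div_add_log_sub_one {r : ℝ} (hr : 0 < r) (t : ℝ) :
    t ≤ Real.exp t / r + (Real.log r - 1) := by
  have h := Real.add_one_le_exp (t - Real.log r)
  rw [Real.exp_sub, Real.exp_log hr] at h
  linarith

lemma mul_stdNormalMaxPdf_le {n : ℕ} (hn : n ≠ 0) (t x : ℝ) :
    t * stdNormalMaxPdf n x
      ≤ Real.exp t * stdNormalPdf x + (Real.log n - 1) * stdNormalMaxPdf n x := by
  have hn' : (0 : ℝ) < n := by positivity
  calc t * stdNormalMaxPdf n x
    _ ≤ (Real.exp t / n + (Real.log n - 1)) * stdNormalMaxPdf n x :=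
      mul_le_mul_of_nonneg_right (le_exp_div_add_log_sub_one hn' t) (stdNormalMaxPdf_nonneg n x)
    _ = Real.exp t / n * stdNormalMaxPdf n x + (Real.log n - 1) * stdNormalMaxPdf n x :=
      add_mul _ _ _
    _ ≤ Real.exp t / n * (n * stdNormalPdf x) + (Real.log n - 1) * stdNormalMaxPdf n x := by
      gcongr
      exact stdNormalMaxPdf_le n x
    _ = Real.exp t * stdNormalPdf x + (Real.log n - 1) * stdNormalMaxPdf n x := by
      rw [← mul_assoc, div_mul_cancel₀ _ hn'.ne']

lemma mul_integral_sq_mul_stdNormalMaxPdf_le {s : ℝ} (hs : s < 1 / 2) {n : ℕ} (hn : n ≠ 0) :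
    s * ∫ x, x ^ 2 * stdNormalMaxPdf n x
      ≤ (∫ x, Real.exp (s * x ^ 2) * stdNormalPdf x) + (Real.log n - 1) := by
  have hexp := integrable_exp_mul_sq_mul_stdNormalPdf hs
  have hmass := (integrable_stdNormalMaxPdf n).const_mul (Real.log n - 1)
  calc s * ∫ x, x ^ 2 * stdNormalMaxPdf n x
    _ = ∫ x, s * (x ^ 2 * stdNormalMaxPdf n x) := (integral_const_mul _ _).symm
    _ ≤ ∫ x, (Real.exp (s * x ^ 2) * stdNormalPdf x + (Real.log n - 1) * stdNormalMaxPdf n x) :=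
      integral_mono ((integrable_pow_mul_stdNormalMaxPdf 2 n).const_mul s) (hexp.add hmass)
        fun x => (mul_assoc _ _ _).symm.trans_le (mul_stdNormalMaxPdf_le hn (s * x ^ 2) x)
    _ = (∫ x, Real.exp (s * x ^ 2) * stdNormalPdf x) + (Real.log n - 1) := by
      rw [integral_add hexp hmass, integral_const_mul, integral_stdNormalMaxPdf hn, mul_one]

lemma isLittleO_const_log_natCast (c : ℝ) :
    (fun _ : ℕ => c) =o[atTop] fun n : ℕ => Real.log n :=
  Real.isLittleO_const_log_atTop.comp_tendsto tendsto_natCast_atTop_atTop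

lemma isTheta_integral_sq_mul_stdNormalMaxPdf :
    (fun n : ℕ => ∫ x, x ^ 2 * stdNormalMaxPdf n x) =Θ[atTop] fun n => Real.log n := by
  have hnonneg (n : ℕ) : 0 ≤ ∫ x, x ^ 2 * stdNormalMaxPdf n x :=
    integral_nonneg fun x => mul_nonneg (sq_nonneg x) (stdNormalMaxPdf_nonneg n x)
  constructor
  · set B := ∫ x, Real.exp (1 / 4 * x ^ 2) * stdNormalPdf x
    have hbound : (fun n : ℕ => ∫ x, x ^ 2 * stdNormalMaxPdf n x)
        =O[atTop] fun n : ℕ => Real.log n + (B - 1) := by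
      refine IsBigO.of_bound 4 ((eventually_ne_atTop 0).mono fun n hn => ?_)
      have hle := mul_integral_sq_mul_stdNormalMaxPdf_le (s := 1 / 4) (by norm_num) hn
      rw [Real.norm_of_nonneg (hnonneg n)]
      linarith [Real.le_norm_self (Real.log n + (B - 1))]
    exact hbound.trans ((isBigO_refl _ _).add_isLittleO (isLittleO_const_log_natCast _))
  · have hpos : 0 < 1 - Real.exp (-stdNormalPdf √2) := by
      simpa using stdNormalPdf_pos √2
    refine IsBigO.of_bound (1 - Real.exp (-stdNormalPdf √2))⁻¹
      ((eventually_ne_atTop 0).mono fun n hn => ?_)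
    rw [Real.norm_of_nonneg (Real.log_natCast_nonneg n), Real.norm_of_nonneg (hnonneg n),
      le_inv_mul_iff₀ hpos]
    exact mul_log_le_integral_sq_mul_stdNormalMaxPdf hn

end SecondMomentOfMaximum

lemma isTheta_natCast_sub_const (c : ℝ) :
    (fun n : ℕ => (n : ℝ) - c) =Θ[atTop] fun n => (n : ℝ) :=
  (IsEquivalent.refl.sub_isLittleO
    ((isLittleO_const_id_atTop c).comp_tendsto tendsto_natCast_atTop_atTop)).isTheta

lemma isTheta_mul_stdNormalMoment_zero_three :
    (fun n : ℕ => n * stdNormalMoment 0 3 (n - 3))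
      =Θ[atTop] fun n => Real.log n / (n : ℝ) ^ 2 := by
  have hsecond := isTheta_integral_sq_mul_stdNormalMaxPdf
  have hone := (isLittleO_const_log_natCast 1).trans_isTheta hsecond.symm
  have hnum : (fun n : ℕ => 2 * ((∫ x, x ^ 2 * stdNormalMaxPdf n x) - 1))
      =Θ[atTop] fun n => Real.log n :=
    ((IsEquivalent.refl.sub_isLittleO hone).isTheta.trans hsecond).const_mul_left two_ne_zero
  have hden : (fun n : ℕ => ((n : ℝ) - 1) * (n - 2)) =Θ[atTop] fun n => (n : ℝ) ^ 2 := by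
    simpa only [sq] using (isTheta_natCast_sub_const 1).mul (isTheta_natCast_sub_const 2)
  refine EventuallyEq.trans_isTheta ?_ (hnum.div hden)
  filter_upwards [eventually_ge_atTop 3] with n hn
  have hn' : (3 : ℝ) ≤ n := by exact_mod_cast hn
  rw [eq_div_iff (mul_pos (by linarith) (by linarith)).ne', mul_comm,
    mul_stdNormalMoment_zero_three hn]

/-- As `K → ∞`, `E[K·φ(X)²·Φ(X)^{K−3}] = Θ((log K)/K²)` for `X ~ N(0,1)`;
the expectation equals `K·∫ φ(x)³·Φ(x)^{K−3} dx`. -/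
theorem argmax_score_moment_asymptotics :
    ∃ c₁ c₂ : ℝ, 0 < c₁ ∧ 0 < c₂ ∧ ∃ K₀ : ℕ, ∀ K : ℕ, K₀ ≤ K →
      c₁ * (Real.log K / (K : ℝ) ^ 2)
          ≤ (K : ℝ) * ∫ x : ℝ, stdNormalPdf x ^ 3 * stdNormalCdf x ^ (K - 3)
        ∧ (K : ℝ) * (∫ x : ℝ, stdNormalPdf x ^ 3 * stdNormalCdf x ^ (K - 3))
            ≤ c₂ * (Real.log K / (K : ℝ) ^ 2) := by
  obtain ⟨c₂, hc₂, hupper⟩ := isTheta_mul_stdNormalMoment_zero_three.isBigO.exists_pos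
  obtain ⟨c₁, hc₁, hlower⟩ := isTheta_mul_stdNormalMoment_zero_three.symm.isBigO.exists_pos
  obtain ⟨K₀, hK₀⟩ := eventually_atTop.1 (hupper.bound.and hlower.bound)
  refine ⟨c₁⁻¹, c₂, inv_pos.2 hc₁, hc₂, K₀, fun K hK => ?_⟩
  have hmoment : ∫ x, stdNormalPdf x ^ 3 * stdNormalCdf x ^ (K - 3)
      = stdNormalMoment 0 3 (K - 3) := by
    simp only [stdNormalMoment, pow_zero, one_mul]
  have hmoment_nonneg : 0 ≤ K * stdNormalMoment 0 3 (K - 3) :=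
    mul_nonneg K.cast_nonneg (stdNormalMoment_nonneg Even.zero 3 _)
  have hlog_nonneg : 0 ≤ Real.log K / (K : ℝ) ^ 2 :=
    div_nonneg (Real.log_natCast_nonneg K) (sq_nonneg _)
  have hbounds := hK₀ K hK
  rw [Real.norm_of_nonneg hmoment_nonneg, Real.norm_of_nonneg hlog_nonneg] at hbounds
  rw [hmoment]
  exact ⟨(inv_mul_le_iff₀ hc₁).2 hbounds.2, hbounds.1⟩
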